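/- arXiv:2106.07712 — 2 statements merged into one kernel-verified Lean document; each statement's English description precedes it below -/
import Mathlib

section
/- Define the shock set C = {c ∈ ℝ \ {0} : E_c ≠ ∅}. Then: (i) C ⊂ (−1, u) ∩ (−v, 1), so in particular C is bounded; and (ii) if E₀ ≠ ∅, then there exists δ > 0 such that every c with 0 < |c| < δ belongs to C, i.e. C contains a punctured interval around 0. -/
/-!
Each cutoff has the form `a / (a + b)`, and such a quotient lies in `(0, 1)` only if `a` and `b`
are nonzero of the same sign (`same_sign_of_ratio_mem`). For `a = λ(1 + c)`, `b = u - c` both being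
negative would force `u < c < -1`, so `-1 < c < u`; symmetrically `-v < c < 1`. For the punctured
interval, fix `λ ∈ E₀`: both cutoffs at this `λ` are continuous in `c` at `0`, because their
denominators there, `λ + u` and `λ + v`, are positive, so they stay in the open interval
`(slo, shi)` for small `c`.
-/

open Set MeasureTheory
open scoped ENNReal

noncomputable section

/-- Cutoff of the match type: m(λ,c). -/
def mcut (u lam c : ℝ) : ℝ := lam * (1 + c) / (lam * (1 + c) + (u - c))

/-- Cutoff of the mismatch type: mm(λ,c). -/
def mmcut (v lam c : ℝ) : ℝ := lam * (1 - c) / (lam * (1 - c) + (v + c))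

/-- Confounding region E_c. -/
def Econf (u v slo shi c : ℝ) : Set ℝ :=
  {lam : ℝ | 0 < lam ∧ mcut u lam c ∈ Ioo slo shi ∧ mmcut v lam c ∈ Ioo slo shi}

/-- The signal class F^∞ on (slo, shi). -/
def Fclass (slo shi : ℝ) : Set (ℝ → ℝ) :=
  {f : ℝ → ℝ | ContinuousOn f (Ioo slo shi)
    ∧ (∀ s ∈ Ioo slo shi, 0 ≤ f s)
    ∧ (∫ s in slo..shi, f s) = 1
    ∧ (∫ s in slo..shi, f s * (1 - 2 * s) / s) = 0
    ∧ (∃ M : ℝ, ∀ s ∈ Ioo slo shi, |f s| ≤ M)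
    ∧ (∃ M : ℝ, ∀ s ∈ Ioo slo shi, |f s * (1 - s) / s| ≤ M)}

/-- G_f(λ,c). -/
def Gfun (p u v slo shi : ℝ) (f : ℝ → ℝ) (lam c : ℝ) : ℝ :=
  p * (∫ s in slo..(mcut u lam c), f s * (1 - 2 * s) / s)
  + (1 - p) * (∫ s in (mmcut v lam c)..shi, f s * (1 - 2 * s) / s)

/-- The shock set C. -/
def Cshock (u v slo shi : ℝ) : Set ℝ :=
  {c : ℝ | c ≠ 0 ∧ (Econf u v slo shi c).Nonempty}

/-- The meaningful shock set C_{ε₀}. -/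
def Ceps (u v slo shi e0 : ℝ) : Set ℝ :=
  Cshock u v slo shi ∩ Ioo (-1 + e0) (u - e0) ∩ Ioo (-v + e0) (1 - e0)

/-- The sup-norm (L∞) distance between two signals on (slo, shi). -/
def supDist (slo shi : ℝ) (f g : ℝ → ℝ) : ℝ :=
  ⨆ s : Ioo slo shi, |f s.1 - g s.1|

/-- `A` is nowhere dense in F^∞ w.r.t. the sup-norm metric: inside every ball of F^∞
there is a smaller ball of F^∞ disjoint from `A`. -/
def NowhereDenseIn (slo shi : ℝ) (A : Set (ℝ → ℝ)) : Prop :=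
  ∀ f ∈ Fclass slo shi, ∀ ε > (0:ℝ), ∃ g ∈ Fclass slo shi,
    supDist slo shi f g < ε ∧ ∃ δ > (0:ℝ), ∀ h ∈ A, ¬ supDist slo shi g h < δ

/-- `A` is meagre (of first category) in F^∞ w.r.t. the sup-norm metric. -/
def MeagreIn (slo shi : ℝ) (A : Set (ℝ → ℝ)) : Prop :=
  ∃ B : ℕ → Set (ℝ → ℝ), (∀ n, NowhereDenseIn slo shi (B n)) ∧ A ⊆ ⋃ n, B n

/-- `f` lies in the closure of `A` inside F^∞ w.r.t. the sup-norm metric. -/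
def InClosureIn (slo shi : ℝ) (A : Set (ℝ → ℝ)) (f : ℝ → ℝ) : Prop :=
  ∀ ε > (0:ℝ), ∃ g ∈ A, supDist slo shi f g < ε

/-- The stationary set S_f of a signal f. -/
def statSet (p u v slo shi e0 : ℝ) (f : ℝ → ℝ) : Set ℝ :=
  {c ∈ Ceps u v slo shi e0 | ∃ lam ∈ Econf u v slo shi 0 ∩ Econf u v slo shi c,
     Gfun p u v slo shi f lam 0 = 0 ∧ Gfun p u v slo shi f lam c = 0}

/-- F_n : signals whose stationary set has Lebesgue measure at least 1/n. -/
def Fn (p u v slo shi e0 : ℝ) (n : ℕ) : Set (ℝ → ℝ) :=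
  {f ∈ Fclass slo shi | (1 : ℝ≥0∞) / n ≤ volume (statSet p u v slo shi e0 f)}

/-- M_λ : shocks in C_{ε₀} whose cutoffs at λ lie in [slo, shi]. -/
def Mset (u v slo shi e0 lam : ℝ) : Set ℝ :=
  {c ∈ Ceps u v slo shi e0 | mcut u lam c ∈ Icc slo shi ∧ mmcut v lam c ∈ Icc slo shi}

/-- λ̲. -/
def lamLo (u v slo shi e0 : ℝ) : ℝ :=
  min ((u - sSup (Ceps u v slo shi e0)) / (1 + sSup (Ceps u v slo shi e0)))
      ((v + sInf (Ceps u v slo shi e0)) / (1 - sInf (Ceps u v slo shi e0)))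

/-- λ̄. -/
def lamHi (u v slo shi e0 : ℝ) : ℝ :=
  max ((u - sInf (Ceps u v slo shi e0)) / (1 + sInf (Ceps u v slo shi e0)))
      ((v + sSup (Ceps u v slo shi e0)) / (1 - sSup (Ceps u v slo shi e0)))

theorem same_sign_of_ratio_mem {a b : ℝ} (h0 : 0 < a / (a + b)) (h1 : a / (a + b) < 1) :
    (0 < a ∧ 0 < b) ∨ (a < 0 ∧ b < 0) := by
  rcases div_pos_iff.1 h0 with ⟨ha, hab⟩ | ⟨ha, hab⟩
  · rw [div_lt_one hab] at h1
    exact Or.inl ⟨ha, by linarith⟩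
  · rw [div_lt_one_of_neg hab] at h1
    exact Or.inr ⟨ha, by linarith⟩

/-- The bounds on the shock imposed by one cutoff. The mismatch cutoff is `mcut` with `c` replaced
by `-c`, so the same lemma serves both. -/
theorem mem_Ioo_of_mcut_mem {u lam c : ℝ} (hu : 0 < u) (hlam : 0 < lam)
    (h0 : 0 < mcut u lam c) (h1 : mcut u lam c < 1) : c ∈ Ioo (-1 : ℝ) u := by
  rcases same_sign_of_ratio_mem h0 h1 with ⟨ha, hb⟩ | ⟨ha, hb⟩
  · have := pos_of_mul_pos_right ha hlam.le
    exact ⟨by linarith, by linarith⟩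
  · have := neg_of_mul_neg_right ha hlam.le
    linarith

theorem mmcut_eq_mcut_neg (v lam c : ℝ) : mmcut v lam c = mcut v lam (-c) := by
  simp only [mmcut, mcut, sub_neg_eq_add, ← sub_eq_add_neg]

theorem continuousAt_mcut_zero {u lam : ℝ} (hu : 0 < u) (hlam : 0 < lam) :
    ContinuousAt (fun c => mcut u lam c) 0 := by
  unfold mcut
  refine ContinuousAt.div (by fun_prop) (by fun_prop) ?_
  have : 0 < lam + u := add_pos hlam hu
  simpa using ne_of_gt this

theorem continuousAt_mmcut_zero {v lam : ℝ} (hv : 0 < v) (hlam : 0 < lam) :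
    ContinuousAt (fun c => mmcut v lam c) 0 := by
  unfold mmcut
  refine ContinuousAt.div (by fun_prop) (by fun_prop) ?_
  have : 0 < lam + v := add_pos hlam hv
  simpa using ne_of_gt this

/-- the shock set C is contained in (-1,u) ∩ (-v,1) (hence bounded),
and if E₀ ≠ ∅ then C contains a punctured interval around 0. -/
theorem shock_set_properties
    (u v slo shi : ℝ) (hu : 0 < u) (hv : 0 < v)
    (hslo : 0 ≤ slo) (hss : slo < shi) (hshi : shi ≤ 1) :
    Cshock u v slo shi ⊆ Ioo (-1 : ℝ) u ∩ Ioo (-v) 1 ∧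
    Bornology.IsBounded (Cshock u v slo shi) ∧
    ((Econf u v slo shi 0).Nonempty →
      ∃ δ > (0:ℝ), ∀ c : ℝ, c ≠ 0 → |c| < δ → c ∈ Cshock u v slo shi) := by
  have hsub : Cshock u v slo shi ⊆ Ioo (-1 : ℝ) u ∩ Ioo (-v) 1 := by
    rintro c ⟨-, lam, hlam, hm, hmm⟩
    rw [mmcut_eq_mcut_neg] at hmm
    have hc := mem_Ioo_of_mcut_mem hu hlam (hslo.trans_lt hm.1) (hm.2.trans_le hshi)
    have hc' := mem_Ioo_of_mcut_mem hv hlam (hslo.trans_lt hmm.1) (hmm.2.trans_le hshi)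
    exact ⟨hc, by linarith [hc'.2], by linarith [hc'.1]⟩
  refine ⟨hsub, (Metric.isBounded_Ioo (-1 : ℝ) u).subset fun c hc => (hsub hc).1, ?_⟩
  rintro ⟨lam, hlam, hm, hmm⟩
  have h1 := (continuousAt_mcut_zero hu hlam).eventually (isOpen_Ioo.mem_nhds hm)
  have h2 := (continuousAt_mmcut_zero hv hlam).eventually (isOpen_Ioo.mem_nhds hmm)
  obtain ⟨δ, hδ, h⟩ := Metric.eventually_nhds_iff.1 (h1.and h2)
  refine ⟨δ, hδ, fun c hc0 hc => ⟨hc0, lam, hlam, ?_⟩⟩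
  exact h (by simpa [Real.dist_eq] using hc)
end
end

section
/- Assume 0 < s̲ < s̄ < 1, E₀ ≠ ∅, and fix ε₀ > 0 such that C_{ε₀} ≠ ∅. Then the closure of E₀ is a compact subset of (0, +∞) (i.e. 0 < inf E₀ ≤ sup E₀ < +∞), and there exist 0 < b̲ ≤ b̄ < 1 such that for every λ in the closure of E₀ and every c in the closure of C_{ε₀}, both m(λ,c) ∈ [b̲, b̄] and mm(λ,c) ∈ [b̲, b̄]. -/
/-!
At `c = 0` the match cutoff is `λ / (λ + u)`, an increasing function of `λ`, so confining it to
`(slo, shi)` confines `λ` to `[slo * u / (1 - slo), shi * u / (1 - shi)]`, a compact interval of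
positive numbers; this contains the closure of `E₀`. The margin `e0` keeps `1 + c`, `u - c`,
`1 - c` and `v + c` at least `e0` on the closure of `C_{ε₀}`, and also forces `-1 < c < 1`, which
bounds these four quantities above. Both cutoffs have the form `x / (x + y)` with `x` and `y`
ranging over compact intervals of positive numbers (`ratio_mem_Icc`).
-/

open Set MeasureTheory
open scoped ENNReal

noncomputable section

/-- The map `x / (x + y)` is increasing in `x` and decreasing in `y`, so on a positive box it is
bounded by its values at two opposite corners. -/
lemma ratio_mem_Icc {x y p P q Q : ℝ} (hp : 0 < p) (hq : 0 < q)
    (hx : x ∈ Icc p P) (hy : y ∈ Icc q Q) :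
    x / (x + y) ∈ Icc (p / (p + Q)) (P / (P + q)) := by
  obtain ⟨hx1, hx2⟩ := hx
  obtain ⟨hy1, hy2⟩ := hy
  have hx0 : 0 < x := by linarith
  have hy0 : 0 < y := by linarith
  constructor
  · rw [div_le_div_iff₀ (by linarith) (by linarith)]
    nlinarith [mul_le_mul hx1 hy2 hy0.le hx0.le]
  · rw [div_le_div_iff₀ (by linarith) (by linarith)]
    nlinarith [mul_le_mul hx2 hy1 hq.le (by linarith : (0 : ℝ) ≤ P)]

lemma Econf_zero_subset {u v slo shi : ℝ} (hu : 0 < u) (hss : slo < shi) (hshi : shi < 1) :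
    Econf u v slo shi 0 ⊆ Icc (slo * u / (1 - slo)) (shi * u / (1 - shi)) := by
  rintro lam ⟨hl, ⟨h1, h2⟩, -⟩
  have hd : 0 < lam + u := by linarith
  simp only [mcut, add_zero, mul_one, sub_zero] at h1 h2
  rw [lt_div_iff₀ hd] at h1
  rw [div_lt_iff₀ hd] at h2
  constructor
  · rw [div_le_iff₀ (by linarith)]
    linarith
  · rw [le_div_iff₀ (by linarith)]
    linarith

/-- for strongly bounded signals, the closure of E₀ is a compact subset
of (0, ∞), and both cutoffs stay in a compact subinterval [b̲, b̄] ⊂ (0,1) uniformly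
over closure(E₀) × closure(C_{ε₀}). -/
theorem E0_closure_compact_and_cutoffs_bounded
    (u v slo shi e0 : ℝ) (hu : 0 < u) (hv : 0 < v)
    (hslo : 0 < slo) (hss : slo < shi) (hshi : shi < 1)
    (hE0 : (Econf u v slo shi 0).Nonempty)
    (he0 : 0 < e0) (hC : (Ceps u v slo shi e0).Nonempty) :
    IsCompact (closure (Econf u v slo shi 0)) ∧
    closure (Econf u v slo shi 0) ⊆ Ioi (0 : ℝ) ∧
    ∃ blo bhi : ℝ, 0 < blo ∧ blo ≤ bhi ∧ bhi < 1 ∧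
      ∀ lam ∈ closure (Econf u v slo shi 0), ∀ c ∈ closure (Ceps u v slo shi e0),
        mcut u lam c ∈ Icc blo bhi ∧ mmcut v lam c ∈ Icc blo bhi := by
  set a := slo * u / (1 - slo) with ha
  set b := shi * u / (1 - shi) with hb
  have ha0 : 0 < a := div_pos (mul_pos hslo hu) (by linarith)
  have hEcl : closure (Econf u v slo shi 0) ⊆ Icc a b :=
    closure_minimal (Econf_zero_subset hu hss hshi) isClosed_Icc
  have hCcl : closure (Ceps u v slo shi e0) ⊆
      Icc (-1 + e0) (u - e0) ∩ Icc (-v + e0) (1 - e0) :=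
    closure_minimal
      (fun c hc => ⟨Ioo_subset_Icc_self hc.1.2, Ioo_subset_Icc_self hc.2⟩)
      (isClosed_Icc.inter isClosed_Icc)
  have hab : a ≤ b := by
    obtain ⟨l, hl⟩ := hE0
    have h := hEcl (subset_closure hl)
    exact h.1.trans h.2
  have hb0 : 0 < b := ha0.trans_le hab
  have key : ∀ lam ∈ closure (Econf u v slo shi 0), ∀ c ∈ closure (Ceps u v slo shi e0),
      mcut u lam c ∈ Icc (a * e0 / (a * e0 + (u + v + 1))) (b * 2 / (b * 2 + e0)) ∧
      mmcut v lam c ∈ Icc (a * e0 / (a * e0 + (u + v + 1))) (b * 2 / (b * 2 + e0)) := by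
    intro lam hlam c hc
    obtain ⟨hl1, hl2⟩ := hEcl hlam
    obtain ⟨⟨hc1, hc2⟩, hc3, hc4⟩ := hCcl hc
    have hl0 : 0 ≤ lam := by linarith
    have hp : 0 < a * e0 := mul_pos ha0 he0
    constructor
    · exact ratio_mem_Icc hp he0
        ⟨mul_le_mul hl1 (by linarith) he0.le hl0, mul_le_mul hl2 (by linarith) (by linarith) hb0.le⟩
        ⟨by linarith, by linarith⟩
    · exact ratio_mem_Icc hp he0
        ⟨mul_le_mul hl1 (by linarith) he0.le hl0, mul_le_mul hl2 (by linarith) (by linarith) hb0.le⟩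
        ⟨by linarith, by linarith⟩
  refine ⟨isCompact_Icc.of_isClosed_subset isClosed_closure hEcl,
    fun l hl => ha0.trans_le (hEcl hl).1, _, _, by positivity, ?_, ?_, key⟩
  -- Nonemptiness of both sets yields a cutoff value lying between the two bounds.
  · obtain ⟨l, hl⟩ := hE0
    obtain ⟨c, hc⟩ := hC
    have h := (key l (subset_closure hl) c (subset_closure hc)).1
    exact h.1.trans h.2
  · rw [div_lt_one (by positivity)]
    linarith
end
end
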